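/- Let n ≥ 2. In the hyperoctahedral group B_n, let W_P = {w ∈ B_n : w(1) = 1} and W_Q = {w ∈ B_n : w(j) > 0 for all 1 ≤ j ≤ n}. Then each of the two sets E_0 = {w : w(j) = −1 for some 1 ≤ j ≤ n} and E_1 = {w : w(j) = 1 for some 1 ≤ j ≤ n} is a single (W_P, W_Q) double coset; in particular these two sets partition B_n and are exactly the (W_P, W_Q) double cosets. -/

import Mathlib

/-- The set `{−n, …, −1, 1, …, n}` of signed indices. -/
def SIdx (n : ℕ) : Type := {x : ℤ // x ≠ 0 ∧ x.natAbs ≤ n}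

instance (n : ℕ) : Neg (SIdx n) :=
  ⟨fun x => ⟨-x.1, ⟨neg_ne_zero.mpr x.2.1, by simpa using x.2.2⟩⟩⟩

/-- Membership in the hyperoctahedral group `B_n`: a permutation `w` of
`{−n, …, −1, 1, …, n}` satisfying `w(−x) = −w(x)` for all `x`. -/
def IsSignedPerm {n : ℕ} (w : Equiv.Perm (SIdx n)) : Prop :=
  ∀ x : SIdx n, w (-x) = -(w x)

/-- `W_P = {w ∈ B_n : w(1) = 1}`. -/
def InWP {n : ℕ} (h : Equiv.Perm (SIdx n)) : Prop :=
  IsSignedPerm h ∧ ∀ x : SIdx n, x.1 = 1 → (h x).1 = 1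

/-- `W_Q = {w ∈ B_n : w(j) > 0 for all 1 ≤ j ≤ n}`. -/
def InWQ {n : ℕ} (k : Equiv.Perm (SIdx n)) : Prop :=
  IsSignedPerm k ∧ ∀ x : SIdx n, 0 < x.1 → 0 < (k x).1

/-- `w` and `w'` lie in the same `(W_P, W_Q)` double coset. -/
def SameDC {n : ℕ} (w w' : Equiv.Perm (SIdx n)) : Prop :=
  ∃ h k : Equiv.Perm (SIdx n), InWP h ∧ InWQ k ∧ w' = h * w * k

/-- `E_0 = {w : w(j) = −1 for some 1 ≤ j ≤ n}`. -/
def InE0 {n : ℕ} (w : Equiv.Perm (SIdx n)) : Prop :=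
  ∃ j : SIdx n, 0 < j.1 ∧ (w j).1 = -1

/-- `E_1 = {w : w(j) = 1 for some 1 ≤ j ≤ n}`. -/
def InE1 {n : ℕ} (w : Equiv.Perm (SIdx n)) : Prop :=
  ∃ j : SIdx n, 0 < j.1 ∧ (w j).1 = 1

/-
`W_P` is the stabilizer of `1` in `B_n`, so `w ↦ w⁻¹ 1` turns the `(W_P, W_Q)` double cosets into
the `W_Q`-orbits on the `B_n`-orbit of `1`. The group `W_Q` is the stabilizer of the set of
positive indices, and signed transpositions show that it has two orbits on the signed indices, the
positive and the negative ones; `w⁻¹ 1` is positive for `w ∈ E_1` and negative for `w ∈ E_0`.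
-/

open MulAction Equiv
open scoped Pointwise

theorem mem_doubleCoset_stabilizer_iff {G X : Type*} [Group G] [MulAction G X] {x : X}
    {K : Subgroup G} {g g' : G} :
    g' ∈ DoubleCoset.doubleCoset g (stabilizer G x) K ↔ g'⁻¹ • x ∈ orbit K (g⁻¹ • x) := by
  rw [DoubleCoset.mem_doubleCoset]
  constructor
  · rintro ⟨h, hh, k, hk, rfl⟩
    have hx : h⁻¹ • x = x := (stabilizer G x).inv_mem hh
    exact ⟨⟨k⁻¹, inv_mem hk⟩, by simp only [Subgroup.mk_smul, mul_inv_rev, mul_smul, hx]⟩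
  · rintro ⟨⟨k, hk⟩, hkx : k • g⁻¹ • x = g'⁻¹ • x⟩
    refine ⟨g' * k * g⁻¹, ?_, k⁻¹, inv_mem hk, by group⟩
    rw [SetLike.mem_coe, mem_stabilizer_iff, mul_smul, mul_smul, hkx, smul_inv_smul]

section SignedPerm

variable {α : Type*} [InvolutiveNeg α]

variable (α) in
/-- The group of permutations commuting with negation; for `α = {−n, …, −1, 1, …, n}` this is the
hyperoctahedral group `B_n`. -/
def signedPermGroup : Subgroup (Perm α) :=
  Subgroup.centralizer {Equiv.neg α}

theorem mem_signedPermGroup_iff {w : Perm α} :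
    w ∈ signedPermGroup α ↔ ∀ x, w (-x) = -w x := by
  simp only [signedPermGroup, Subgroup.mem_centralizer_singleton_iff, Perm.ext_iff,
    Perm.mul_apply, Equiv.neg_apply]

theorem neg_mem_signedPermGroup : Equiv.neg α ∈ signedPermGroup α :=
  Subgroup.mem_centralizer_singleton_iff.mpr rfl

variable [DecidableEq α]

/-- The signed transposition exchanging `a` with `b` and `-a` with `-b`. It is meant for
`{a, b}` disjoint from `{-a, -b}`, where the order of the two factors is immaterial. -/
def signedSwap (a b : α) : Perm α :=
  swap a b * swap (-a) (-b)

variable {a b : α}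

theorem signedSwap_apply_left (ha : a ≠ -a) (hab : a ≠ -b) : signedSwap a b a = b := by
  rw [signedSwap, Perm.mul_apply, swap_apply_of_ne_of_ne ha hab, swap_apply_left]

theorem signedSwap_mem_signedPermGroup (ha : a ≠ -a) (hb : b ≠ -b) (hab : a ≠ -b) :
    signedSwap a b ∈ signedPermGroup α := by
  have hcomm : swap a b * swap (-a) (-b) = swap (-a) (-b) * swap a b := by
    rw [mul_swap_eq_swap_mul, swap_apply_of_ne_of_ne ha.symm (neg_eq_iff_eq_neg.not.mpr hab),
      swap_apply_of_ne_of_ne hab.symm hb.symm]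
  refine Subgroup.mem_centralizer_singleton_iff.mpr (Eq.symm ?_)
  calc
    Equiv.neg α * (swap a b * swap (-a) (-b))
        = swap (-a) (-b) * swap a b * Equiv.neg α := by
      simp only [← mul_assoc, mul_swap_eq_swap_mul (Equiv.neg α), Equiv.neg_apply]
      simp only [mul_assoc, mul_swap_eq_swap_mul (Equiv.neg α), Equiv.neg_apply, neg_neg]
    _ = swap a b * swap (-a) (-b) * Equiv.neg α := by rw [hcomm]

end SignedPerm

namespace SIdx

variable {n : ℕ}

instance : DecidableEq (SIdx n) := inferInstanceAs (DecidableEq (Subtype _))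

instance : InvolutiveNeg (SIdx n) where
  neg_neg x := Subtype.ext (neg_neg x.1)

instance [NeZero n] : One (SIdx n) :=
  ⟨1, one_ne_zero, NeZero.one_le⟩

theorem val_neg (x : SIdx n) : (-x).1 = -x.1 := rfl

theorem val_one [NeZero n] : (1 : SIdx n).1 = 1 := rfl

variable (n) in
/-- The set `{1, …, n}` of positive indices, whose stabilizer in `B_n` is `W_Q`. -/
def positives : Set (SIdx n) := {x | 0 < x.1}

theorem mem_positives {x : SIdx n} : x ∈ positives n ↔ 0 < x.1 := Iff.rfl

theorem neg_mem_positives {x : SIdx n} : -x ∈ positives n ↔ x ∉ positives n := by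
  have := x.2.1
  rw [mem_positives, mem_positives, val_neg]
  omega

theorem ne_neg_of_mem_positives_iff {x y : SIdx n} (h : x ∈ positives n ↔ y ∈ positives n) :
    x ≠ -y := by
  rintro rfl
  rw [neg_mem_positives] at h
  tauto

theorem signedSwap_mem_stabilizer_positives {x y : SIdx n}
    (h : x ∈ positives n ↔ y ∈ positives n) :
    signedSwap x y ∈ stabilizer (Perm (SIdx n)) (positives n) :=
  mul_mem (swap_mem_stabilizer.mpr h)
    (swap_mem_stabilizer.mpr (by rw [neg_mem_positives, neg_mem_positives, h]))

theorem mem_orbit_stabilizer_positives_iff {x y : SIdx n} :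
    y ∈ orbit (stabilizer (signedPermGroup (SIdx n)) (positives n)) x ↔
      (y ∈ positives n ↔ x ∈ positives n) := by
  constructor
  · rintro ⟨⟨k, hk⟩, rfl⟩
    exact mem_stabilizer_set.mp hk x
  · intro h
    have hxy := ne_neg_of_mem_positives_iff h.symm
    have hx : x ≠ -x := ne_neg_of_mem_positives_iff Iff.rfl
    have hy : y ≠ -y := ne_neg_of_mem_positives_iff Iff.rfl
    exact ⟨⟨⟨signedSwap x y, signedSwap_mem_signedPermGroup hx hy hxy⟩,
      mem_stabilizer_set.mpr <|
        mem_stabilizer_set.mp (signedSwap_mem_stabilizer_positives h.symm)⟩,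
      signedSwap_apply_left hx hxy⟩

end SIdx

section DoubleCosets

open SIdx

variable {n : ℕ} {w w' : Perm (SIdx n)}

theorem isSignedPerm_iff_mem : IsSignedPerm w ↔ w ∈ signedPermGroup (SIdx n) :=
  mem_signedPermGroup_iff.symm

theorem IsSignedPerm.inWQ_iff (hw : IsSignedPerm w) :
    InWQ w ↔ (⟨w, isSignedPerm_iff_mem.mp hw⟩ : signedPermGroup (SIdx n)) ∈
      stabilizer (signedPermGroup (SIdx n)) (positives n) := by
  rw [mem_stabilizer_set]
  refine ⟨fun h x => ⟨fun hwx => ?_, h.2 x⟩, fun h => ⟨hw, fun x => (h x).mpr⟩⟩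
  by_contra hx
  have hneg : w (-x) ∈ positives n := h.2 (-x) (neg_mem_positives.mpr hx)
  rw [hw] at hneg
  exact neg_mem_positives.mp hneg hwx

variable [NeZero n]

theorem IsSignedPerm.inWP_iff (hw : IsSignedPerm w) :
    InWP w ↔ (⟨w, isSignedPerm_iff_mem.mp hw⟩ : signedPermGroup (SIdx n)) ∈
      stabilizer (signedPermGroup (SIdx n)) (1 : SIdx n) := by
  refine ⟨fun h => Subtype.ext (h.2 1 rfl), fun h => ⟨hw, fun x hx => ?_⟩⟩
  obtain rfl : x = 1 := Subtype.ext hx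
  have hw1 : w 1 = 1 := mem_stabilizer_iff.mp h
  rw [hw1, val_one]

theorem IsSignedPerm.sameDC_iff_mem_doubleCoset (hw : IsSignedPerm w) (hw' : IsSignedPerm w') :
    SameDC w w' ↔ (⟨w', isSignedPerm_iff_mem.mp hw'⟩ : signedPermGroup (SIdx n)) ∈
      DoubleCoset.doubleCoset ⟨w, isSignedPerm_iff_mem.mp hw⟩
        (stabilizer (signedPermGroup (SIdx n)) (1 : SIdx n))
        (stabilizer (signedPermGroup (SIdx n)) (positives n)) := by
  rw [DoubleCoset.mem_doubleCoset]
  constructor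
  · rintro ⟨h, k, hh, hk, hw'_eq⟩
    exact ⟨_, hh.1.inWP_iff.mp hh, _, hk.1.inWQ_iff.mp hk, Subtype.ext hw'_eq⟩
  · rintro ⟨⟨h, hsigned⟩, hh, ⟨k, ksigned⟩, hk, hw'_eq⟩
    exact ⟨h, k, (isSignedPerm_iff_mem.mpr hsigned).inWP_iff.mpr hh,
      (isSignedPerm_iff_mem.mpr ksigned).inWQ_iff.mpr hk, congrArg Subtype.val hw'_eq⟩

theorem IsSignedPerm.sameDC_iff (hw : IsSignedPerm w) (hw' : IsSignedPerm w') :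
    SameDC w w' ↔ (w'⁻¹ 1 ∈ positives n ↔ w⁻¹ 1 ∈ positives n) := by
  rw [hw.sameDC_iff_mem_doubleCoset hw', mem_doubleCoset_stabilizer_iff,
    mem_orbit_stabilizer_positives_iff]
  rfl

theorem inE1_iff : InE1 w ↔ w⁻¹ 1 ∈ positives n := by
  constructor
  · rintro ⟨j, hj, hwj⟩
    have hw1 : w j = 1 := Subtype.ext hwj
    rwa [Perm.inv_eq_iff_eq.mpr hw1.symm]
  · exact fun h => ⟨w⁻¹ 1, h, by rw [Perm.eq_inv_iff_eq.mp rfl, val_one]⟩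

theorem IsSignedPerm.inE0_iff (hw : IsSignedPerm w) : InE0 w ↔ w⁻¹ 1 ∉ positives n := by
  rw [← neg_mem_positives]
  constructor
  · rintro ⟨j, hj, hwj⟩
    have hw1 : w (-j) = 1 := by
      rw [hw]
      exact Subtype.ext (by rw [val_neg, hwj, val_one, neg_neg])
    rwa [Perm.inv_eq_iff_eq.mpr hw1.symm, neg_neg]
  · exact fun h => ⟨-w⁻¹ 1, h, by rw [hw, Perm.eq_inv_iff_eq.mp rfl, val_neg, val_one]⟩

end DoubleCosets

/-- For `n ≥ 2`, the sets `E_0` and `E_1` are each a single `(W_P, W_Q)` double coset,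
and they partition `B_n` (so they are exactly the double cosets). -/
theorem stmt_10 (n : ℕ) (hn : 2 ≤ n) :
    ((∃ w : Equiv.Perm (SIdx n), IsSignedPerm w ∧ InE0 w) ∧
     (∃ w : Equiv.Perm (SIdx n), IsSignedPerm w ∧ InE1 w)) ∧
    ((∀ w w' : Equiv.Perm (SIdx n), IsSignedPerm w → IsSignedPerm w' →
        InE0 w → (InE0 w' ↔ SameDC w w')) ∧
     (∀ w w' : Equiv.Perm (SIdx n), IsSignedPerm w → IsSignedPerm w' →
        InE1 w → (InE1 w' ↔ SameDC w w'))) ∧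
    ((∀ w : Equiv.Perm (SIdx n), IsSignedPerm w → (InE0 w ∨ InE1 w)) ∧
     (∀ w : Equiv.Perm (SIdx n), IsSignedPerm w → ¬(InE0 w ∧ InE1 w))) := by
  have : NeZero n := ⟨by omega⟩
  have hneg : IsSignedPerm (Equiv.neg (SIdx n)) :=
    isSignedPerm_iff_mem.mpr neg_mem_signedPermGroup
  refine ⟨⟨⟨Equiv.neg _, hneg, 1, one_pos, rfl⟩, ⟨1, fun _ => rfl, 1, one_pos, rfl⟩⟩,
    ⟨fun w w' hw hw' hE => ?_, fun w w' hw hw' hE => ?_⟩, fun w hw => ?_, fun w hw => ?_⟩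
  · rw [hw.inE0_iff] at hE
    rw [hw'.inE0_iff, hw.sameDC_iff hw', iff_false_right hE]
  · rw [inE1_iff] at hE
    rw [inE1_iff, hw.sameDC_iff hw', iff_true_right hE]
  · rw [hw.inE0_iff, inE1_iff]
    exact (em _).symm
  · rw [hw.inE0_iff, inE1_iff]
    exact fun h => h.1 h.2
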